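/- Let X be a set whose cardinality κ is a strong limit cardinal, and let T2 be the set of rarely 1-1 binary operations on X. Then T2 is closed under composition (for f, g, h ∈ T2 the operation (x,y) ↦ f(g(x,y), h(x,y)) is in T2) and the clone ⟨T2⟩ contains all unary operations. If κ is moreover singular, then Pol(T2) is a precomplete clone. -/

import Mathlib

universe u v

open Cardinal

/-- The set of all finitary operations on `X`: an `n`-th component element is an
operation of arity `n + 1` (so all arities are `≥ 1`). -/
abbrev Ops (X : Type u) : Type u := Σ n : ℕ, ((Fin (n + 1) → X) → X)

/-- A clone: contains all projections and is closed under composition. -/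
def IsClone {X : Type u} (C : Set (Ops X)) : Prop :=
  (∀ (n : ℕ) (k : Fin (n + 1)), (⟨n, fun x => x k⟩ : Ops X) ∈ C) ∧
  ∀ (n m : ℕ) (f : (Fin (n + 1) → X) → X), (⟨n, f⟩ : Ops X) ∈ C →
    ∀ g : Fin (n + 1) → ((Fin (m + 1) → X) → X), (∀ i, (⟨m, g i⟩ : Ops X) ∈ C) →
      (⟨m, fun x => f fun i => g i x⟩ : Ops X) ∈ C

/-- The clone generated by a set of operations. -/
def cloneGen {X : Type u} (F : Set (Ops X)) : Set (Ops X) :=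
  ⋂₀ {C : Set (Ops X) | IsClone C ∧ F ⊆ C}

/-- A precomplete (maximal) clone. -/
def IsPrecompleteClone {X : Type u} (C : Set (Ops X)) : Prop :=
  IsClone C ∧ C ≠ Set.univ ∧ ∀ f : Ops X, f ∉ C → cloneGen (insert f C) = Set.univ

/-- A unary function, viewed as a unary operation in `Ops X`. -/
def unaryOp {X : Type u} (F : X → X) : Ops X := ⟨0, fun x => F (x 0)⟩

/-- The polymorphism clone of a set of binary operations. -/
def Pol2 {X : Type u} (H : Set (X → X → X)) : Set (Ops X) :=
  {f : Ops X | ∀ g : Fin (f.1 + 1) → (X → X → X), (∀ i, g i ∈ H) →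
    (fun x y => f.2 fun i => g i x y) ∈ H}

/-- The rarely 1-1 binary operations on `X` (of strong limit cardinality `κ`):
there is `μ < κ` such that the operation is not injective on any `μ × μ` rectangle. -/
def T2rare (X : Type u) : Set (X → X → X) :=
  {f | ∃ μ : Cardinal.{u}, μ < #X ∧ ∀ A B : Set X, #A = μ → #B = μ →
    ¬ Set.InjOn (fun p : X × X => f p.1 p.2) (A ×ˢ B)}

/-!
A binary operation is rarely 1-1 iff for some `μ < κ` it has no injective `μ × μ` rectangle. The
key is a polarized canonization theorem: since `κ` is a strong limit, every operation restricted
to a large enough rectangle becomes, on a large subrectangle, either injective or independent of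
one of its arguments. If `f (g x y) (h x y)` is injective on a large rectangle and `g`, `h` are
both canonical there, then `g` or `h` is injective, or each depends on exactly one argument, not
the same one, so that `f` is injective on a large rectangle.

For precompleteness let `F` have injective `μ × μ` rectangles for all `μ < κ`. As `κ` is singular,
`X` is a union of fewer than `κ` small pieces. On a product of two pieces `F` is injective after a
change of variables that depends only on the pair of pieces; this change of variables and the code
of the pair are rarely 1-1 because all but one of their arguments range over fewer than `κ`
values. So `F` and the rarely 1-1 operations generate a pairing function, and with the unary
operations everything.
-/

open Function Set

section CardinalCombinatorics

variable {α β γ ι : Type u} {μ κ : Cardinal.{u}}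

theorem two_power_mul_lt {ν : Cardinal.{u}} (hκ : κ.IsStrongLimit) (hμ : μ < κ) (hν : ν < κ) :
    2 ^ (μ * ν) < κ :=
  hκ.isStrongPrelimit (mul_lt_of_lt hκ.aleph0_le hμ hν)

theorem mk_biUnion_le_mul {s : Set ι} {A : ι → Set α} (h : ∀ i ∈ s, #(A i) ≤ μ) :
    #(⋃ i ∈ s, A i) ≤ #s * μ := by
  refine (mk_biUnion_le A s).trans ?_
  gcongr
  exact ciSup_le' fun i => h i i.2

theorem exists_lt_mk_inter_preimage {f : α → β} {S : Set α} (h : #(f '' S) * μ < #S) :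
    ∃ y, μ < #↥(S ∩ f ⁻¹' {y}) := by
  by_contra! hfiber
  have hcover : S ⊆ ⋃ y ∈ f '' S, S ∩ f ⁻¹' {y} := fun x hx =>
    mem_biUnion (mem_image_of_mem f hx) ⟨hx, rfl⟩
  exact h.not_ge ((mk_le_mk_of_subset hcover).trans (mk_biUnion_le_mul fun y _ => hfiber y))

theorem exists_const_or_injOn (f : α → β) {S : Set α} (h : μ * μ < #S) :
    ∃ T ⊆ S, μ ≤ #T ∧ ((∀ x ∈ T, ∀ y ∈ T, f x = f y) ∨ InjOn f T) := by
  rcases le_total #(f '' S) μ with himage | himage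
  · obtain ⟨y, hy⟩ := exists_lt_mk_inter_preimage ((mul_le_mul_left himage μ).trans_lt h)
    exact ⟨_, inter_subset_left, hy.le, .inl fun x hx x' hx' => hx.2.trans hx'.2.symm⟩
  · obtain ⟨T, hTS, hT⟩ := (surjOn_image f S).exists_bijOn_subset
    refine ⟨T, hTS, ?_, .inr hT.injOn⟩
    rwa [← mk_image_eq_of_injOn f T hT.injOn, hT.image_eq]

theorem exists_injOn_mapsTo_of_mk_le [Nonempty β] {P : Set α} {A : Set β} (h : #P ≤ #A) :
    ∃ φ : α → β, InjOn φ P ∧ MapsTo φ P A := by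
  obtain ⟨e⟩ := h
  let φ : α → β := extend Subtype.val (fun x : P => (e x : β)) fun _ => Classical.arbitrary β
  have hφ (x : P) : φ x = e x := Subtype.val_injective.extend_apply _ _ x
  refine ⟨φ, fun x hx x' hx' hxx' => ?_, fun x hx => hφ ⟨x, hx⟩ ▸ (e ⟨x, hx⟩).2⟩
  rw [hφ ⟨x, hx⟩, hφ ⟨x', hx'⟩] at hxx'
  exact congrArg Subtype.val (e.injective (Subtype.ext hxx'))

theorem exists_pairwiseDisjoint_subfamily {F : ι → Set γ} {B : Set ι} {σ ν : Cardinal.{u}}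
    (hne : ∀ b ∈ B, (F b).Nonempty) (hcard : ∀ b ∈ B, #(F b) ≤ σ)
    (hmult : ∀ c, #{b | b ∈ B ∧ c ∈ F b} ≤ ν) (hB : μ * σ * ν < #B) :
    ∃ B' ⊆ B, μ ≤ #B' ∧ B'.PairwiseDisjoint F := by
  -- Vitali's lemma with all radii zero provides a maximal disjoint subfamily.
  obtain ⟨S, hSB, hS, hmeet⟩ := Vitali.exists_disjoint_subfamily_covering_enlargement F B
    (fun _ => 0) 2 one_lt_two (fun _ _ => le_rfl) 0 (fun _ _ => le_rfl) hne
  refine ⟨S, hSB, ?_, hS⟩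
  by_contra! hlt
  have hcover : B ⊆ ⋃ c ∈ ⋃ s ∈ S, F s, {b | b ∈ B ∧ c ∈ F b} := fun b hb => by
    obtain ⟨s, hs, ⟨c, hcb, hcs⟩, -⟩ := hmeet b hb
    exact mem_biUnion (mem_biUnion hs hcs) ⟨hb, hcb⟩
  refine hB.not_ge ?_
  calc #B ≤ #(⋃ c ∈ ⋃ s ∈ S, F s, {b | b ∈ B ∧ c ∈ F b}) := mk_le_mk_of_subset hcover
    _ ≤ #(⋃ s ∈ S, F s) * ν := mk_biUnion_le_mul fun c _ => hmult c
    _ ≤ #S * σ * ν := by gcongr; exact mk_biUnion_le_mul fun s hs => hcard s (hSB hs)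
    _ ≤ μ * σ * ν := by gcongr

theorem exists_fibers_lt_of_isSingular (hα : (#α).IsSingular) :
    ∃ (ι : Type u) (c : α → ι), #ι < #α ∧ ∀ i, #(c ⁻¹' {i}) < #α := by
  obtain ⟨_, _, hord⟩ := exists_ord_eq_type_lt α
  obtain ⟨S, hS, hScard⟩ := Order.exists_cof_eq α
  have hcof : Order.cof α < #α := by
    simpa only [hord, Ordinal.cof_type] using hα.cof_ord_lt
  choose c hcS hle using hS
  refine ⟨S, fun x => ⟨c x, hcS x⟩, hScard ▸ hcof, fun i => ?_⟩
  have hsub : (fun x => (⟨c x, hcS x⟩ : S)) ⁻¹' {i} ⊆ Iic i.1 := by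
    rintro x rfl
    exact hle x
  exact (mk_le_mk_of_subset hsub).trans_lt (mk_Iic_lt i.1 hord hα.aleph0_le)

theorem exists_injective2 (hα : ℵ₀ ≤ #α) : ∃ q : α → α → α, Injective2 q := by
  obtain ⟨e⟩ : #(α × α) ≤ #α := by simp [mul_eq_self hα]
  exact ⟨fun a b => e (a, b), fun _ _ _ _ h => Prod.mk.inj (e.injective h)⟩

end CardinalCombinatorics

section Canonization

variable {α β γ : Type u} {μ κ : Cardinal.{u}} {g : α → β → γ} {A A' : Set α} {B B' : Set β}

/-- On the rectangle `A × B` the binary function `g` does not depend on its first argument.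
Independence of the second argument is expressed as `IndepFst (flip g) B A`. -/
def IndepFst (g : α → β → γ) (A : Set α) (B : Set β) : Prop :=
  ∀ b ∈ B, ∀ a ∈ A, ∀ a' ∈ A, g a b = g a' b

/-- The possible outcomes of canonization of a binary function on a rectangle `A × B`: independent
of the first argument, independent of the second one, or injective. -/
def IsCanonicalOn (g : α → β → γ) (A : Set α) (B : Set β) : Prop :=
  IndepFst g A B ∨ IndepFst (flip g) B A ∨ InjOn (uncurry g) (A ×ˢ B)

theorem IndepFst.mono (h : IndepFst g A B) (hA : A' ⊆ A) (hB : B' ⊆ B) : IndepFst g A' B' :=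
  fun b hb a ha a' ha' => h b (hB hb) a (hA ha) a' (hA ha')

theorem IsCanonicalOn.mono (h : IsCanonicalOn g A B) (hA : A' ⊆ A) (hB : B' ⊆ B) :
    IsCanonicalOn g A' B' :=
  h.imp (·.mono hA hB) (.imp (·.mono hB hA) (·.mono (prod_mono hA hB)))

theorem IndepFst.not_injOn_uncurry (h : IndepFst g A B) (hA : A.Nontrivial) (hB : B.Nonempty) :
    ¬ InjOn (uncurry g) (A ×ˢ B) := by
  obtain ⟨a, ha, a', ha', hne⟩ := hA
  obtain ⟨b, hb⟩ := hB
  exact fun hinj => hne (congrArg Prod.fst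
    (@hinj (a, b) ⟨ha, hb⟩ (a', b) ⟨ha', hb⟩ (h b hb a ha a' ha')))

theorem injOn_uncurry_flip (h : InjOn (uncurry g) (A ×ˢ B)) :
    InjOn (uncurry (flip g)) (B ×ˢ A) := by
  rw [uncurry_flip]
  exact h.comp Prod.swap_injective.injOn fun p hp => ⟨hp.2, hp.1⟩

theorem exists_indepFst_or_forall_injOn (g : α → β → γ) (hA : μ * μ < #A)
    (hB : 2 ^ (#A * #A) * μ < #B) :
    ∃ A' ⊆ A, ∃ B' ⊆ B, μ ≤ #A' ∧ μ ≤ #B' ∧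
      (IndepFst g A' B' ∨ ∀ b ∈ B', InjOn (fun a => g a b) A') := by
  let ker (b : β) : Set (A × A) := {p | g p.1 b = g p.2 b}
  have hker : #(ker '' B) ≤ 2 ^ (#A * #A) := (mk_set_le _).trans_eq (by simp)
  obtain ⟨K, hK⟩ := exists_lt_mk_inter_preimage ((mul_le_mul_left hker μ).trans_lt hB)
  obtain ⟨⟨b₀, -, hb₀⟩⟩ := mk_ne_zero_iff.1 (pos_of_gt hK).ne'
  have hsame : ∀ b ∈ B ∩ ker ⁻¹' {K}, ∀ a ∈ A, ∀ a' ∈ A, g a b₀ = g a' b₀ ↔ g a b = g a' b :=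
    fun b hb a ha a' ha' => Set.ext_iff.1 (hb₀.trans hb.2.symm) (⟨a, ha⟩, ⟨a', ha'⟩)
  obtain ⟨A', hA', hμA', hconst | hinj⟩ := exists_const_or_injOn (fun a => g a b₀) hA
  · exact ⟨A', hA', _, inter_subset_left, hμA', hK.le, .inl fun b hb a ha a' ha' =>
      (hsame b hb a (hA' ha) a' (hA' ha')).1 (hconst a ha a' ha')⟩
  · exact ⟨A', hA', _, inter_subset_left, hμA', hK.le, .inr fun b hb a ha a' ha' heq =>
      hinj ha ha' ((hsame b hb a (hA' ha) a' (hA' ha')).2 heq)⟩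

theorem exists_bound_indepFst_or_forall_injOn (hκ : κ.IsStrongLimit) (hμ : μ < κ) :
    ∃ l < κ, ∀ (g : α → β → γ) (A : Set α) (B : Set β), l ≤ #A → l ≤ #B →
      ∃ A' ⊆ A, ∃ B' ⊆ B, μ ≤ #A' ∧ μ ≤ #B' ∧
        (IndepFst g A' B' ∨ ∀ b ∈ B', InjOn (fun a => g a b) A') := by
  set ν : Cardinal.{u} := 2 ^ (μ * μ)
  have hν : ν < κ := two_power_mul_lt hκ hμ hμ
  refine ⟨max ν (2 ^ (2 ^ (ν * ν) * μ)),
    max_lt hν (two_power_mul_lt hκ (two_power_mul_lt hκ hν hν) hμ), fun g A B hA hB => ?_⟩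
  obtain ⟨A₀, hA₀, hA₀ν⟩ := le_mk_iff_exists_subset.1 ((le_max_left _ _).trans hA)
  obtain ⟨A', hA', h⟩ := exists_indepFst_or_forall_injOn (μ := μ) (A := A₀) (B := B) g
    (by rw [hA₀ν]; exact cantor _)
    (by rw [hA₀ν]; exact (cantor _).trans_le ((le_max_right _ _).trans hB))
  exact ⟨A', hA'.trans hA₀, h⟩

theorem exists_injOn_uncurry_of_forall_injOn (hA : A.Nonempty) (hB : μ * #A * #A < #B)
    (hcol : ∀ b ∈ B, InjOn (fun a => g a b) A) (hrow : ∀ a ∈ A, InjOn (g a) B) :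
    ∃ B' ⊆ B, μ ≤ #B' ∧ InjOn (uncurry g) (A ×ˢ B') := by
  have hmult (c : γ) : #{b | b ∈ B ∧ c ∈ (fun a => g a b) '' A} ≤ #A := by
    have hcover : {b | b ∈ B ∧ c ∈ (fun a => g a b) '' A} ⊆ ⋃ a ∈ A, {b | b ∈ B ∧ g a b = c} := by
      rintro b ⟨hb, a, ha, hac⟩
      exact mem_biUnion ha ⟨hb, hac⟩
    have hone : ∀ a ∈ A, #{b | b ∈ B ∧ g a b = c} ≤ 1 := fun a ha =>
      mk_le_one_iff_set_subsingleton.2 fun b hb b' hb' =>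
        hrow a ha hb.1 hb'.1 (hb.2.trans hb'.2.symm)
    simpa only [mul_one] using (mk_le_mk_of_subset hcover).trans (mk_biUnion_le_mul hone)
  obtain ⟨B', hB', hμB', hdisj⟩ := exists_pairwiseDisjoint_subfamily
    (fun b _ => hA.image fun a => g a b) (fun _ _ => mk_image_le) hmult hB
  refine ⟨B', hB', hμB', ?_⟩
  rintro ⟨a, b⟩ ⟨ha, hb⟩ ⟨a', b'⟩ ⟨ha', hb'⟩ heq
  obtain rfl : b = b' :=
    hdisj.elim_set hb hb' _ (mem_image_of_mem _ ha) ⟨a', ha', heq.symm⟩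
  exact Prod.ext (hcol b (hB' hb) ha ha' heq) rfl

theorem exists_bound_isCanonicalOn (hκ : κ.IsStrongLimit) (hμ : μ < κ) (hμ₀ : μ ≠ 0) :
    ∃ l < κ, ∀ (g : α → β → γ) (A : Set α) (B : Set β), l ≤ #A → l ≤ #B →
      ∃ A' ⊆ A, ∃ B' ⊆ B, μ ≤ #A' ∧ μ ≤ #B' ∧ IsCanonicalOn g A' B' := by
  set ν : Cardinal.{u} := 2 ^ (μ * μ * μ)
  have hν : ν < κ := two_power_mul_lt hκ (mul_lt_of_lt hκ.aleph0_le hμ hμ) hμ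
  have hμν : μ ≤ ν := by
    have hone : 1 ≤ μ := Cardinal.one_le_iff_ne_zero.2 hμ₀
    calc μ = 1 * 1 * μ := by simp
      _ ≤ μ * μ * μ := by gcongr
      _ ≤ ν := (cantor _).le
  obtain ⟨l, hl, hrows⟩ := exists_bound_indepFst_or_forall_injOn (α := β) (β := α) (γ := γ) hκ hν
  obtain ⟨l', hl', hcols⟩ :=
    exists_bound_indepFst_or_forall_injOn (α := α) (β := β) (γ := γ) hκ (max_lt hl hν)
  refine ⟨l', hl', fun g A B hA hB => ?_⟩
  obtain ⟨A₁, hA₁, B₁, hB₁, hlA₁, hlB₁, hindep | hcol⟩ := hcols g A B hA hB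
  · exact ⟨A₁, hA₁, B₁, hB₁, (hμν.trans (le_max_right _ _)).trans hlA₁,
      (hμν.trans (le_max_right _ _)).trans hlB₁, .inl hindep⟩
  obtain ⟨B₂, hB₂, A₂, hA₂, hνB₂, hνA₂, hindep | hrow⟩ :=
    hrows (flip g) B₁ A₁ ((le_max_left _ _).trans hlB₁) ((le_max_left _ _).trans hlA₁)
  · exact ⟨A₂, hA₂.trans hA₁, B₂, hB₂.trans hB₁, hμν.trans hνA₂, hμν.trans hνB₂,
      .inr (.inl hindep)⟩
  obtain ⟨A₃, hA₃, hA₃μ⟩ := le_mk_iff_exists_subset.1 (hμν.trans hνA₂)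
  have hA₃ne : A₃.Nonempty := nonempty_coe_sort.1 (mk_ne_zero_iff.1 (hA₃μ ▸ hμ₀))
  obtain ⟨B₃, hB₃, hμB₃, hinj⟩ := exists_injOn_uncurry_of_forall_injOn (μ := μ) (B := B₂) hA₃ne
    (by rw [hA₃μ]; exact (cantor _).trans_le hνB₂)
    (fun b hb => (hcol b (hB₂ hb)).mono (hA₃.trans hA₂)) fun a ha => hrow a (hA₃ ha)
  exact ⟨A₃, hA₃.trans (hA₂.trans hA₁), B₃, hB₃.trans (hB₂.trans hB₁), hA₃μ.ge, hμB₃,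
    .inr (.inr hinj)⟩

end Canonization

section InjectiveRectangles

variable {α β γ α' β' : Type u} {μ : Cardinal.{u}} {A : Set α} {B : Set β}

/-- `f` is injective on some rectangle with both sides of cardinality at least `μ`. The rarely 1-1
operations are those for which this fails for some `μ < #X`. -/
def HasInjRect (f : α → β → γ) (μ : Cardinal.{u}) : Prop :=
  ∃ (A : Set α) (B : Set β), μ ≤ #A ∧ μ ≤ #B ∧ InjOn (uncurry f) (A ×ˢ B)

theorem HasInjRect.mono {f : α → β → γ} {ν : Cardinal.{u}} (h : HasInjRect f ν) (hμν : μ ≤ ν) :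
    HasInjRect f μ :=
  let ⟨A, B, hA, hB, hinj⟩ := h
  ⟨A, B, hμν.trans hA, hμν.trans hB, hinj⟩

theorem HasInjRect.flip {f : α → β → γ} (h : HasInjRect f μ) : HasInjRect (flip f) μ :=
  let ⟨A, B, hA, hB, hinj⟩ := h
  ⟨B, A, hB, hA, injOn_uncurry_flip hinj⟩

theorem hasInjRect_of_injective2 {f : α → α → γ} (hf : Injective2 f) (hμ : μ ≤ #α) :
    HasInjRect f μ :=
  ⟨univ, univ, by rwa [mk_univ], by rwa [mk_univ], hf.uncurry.injOn⟩

theorem hasInjRect_of_injOn_comp {f : α' → β' → γ} {φ : α → α'} {ψ : β → β'} (hμ : μ ≠ 0)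
    (hA : μ ≤ #A) (hB : μ ≤ #B) (h : InjOn (uncurry fun a b => f (φ a) (ψ b)) (A ×ˢ B)) :
    HasInjRect f μ := by
  have hcomp : InjOn (uncurry f ∘ Prod.map φ ψ) (A ×ˢ B) := h
  have hmap : InjOn (Prod.map φ ψ) (A ×ˢ B) := hcomp.of_comp
  obtain ⟨⟨a₀, ha₀⟩⟩ := mk_ne_zero_iff.1 (hμ.bot_lt.trans_le hA).ne'
  obtain ⟨⟨b₀, hb₀⟩⟩ := mk_ne_zero_iff.1 (hμ.bot_lt.trans_le hB).ne'
  have hφ : InjOn φ A := fun a ha a' ha' heq =>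
    congrArg Prod.fst (@hmap (a, b₀) ⟨ha, hb₀⟩ (a', b₀) ⟨ha', hb₀⟩ (Prod.ext heq rfl))
  have hψ : InjOn ψ B := fun b hb b' hb' heq =>
    congrArg Prod.snd (@hmap (a₀, b) ⟨ha₀, hb⟩ (a₀, b') ⟨ha₀, hb'⟩ (Prod.ext rfl heq))
  refine ⟨φ '' A, ψ '' B, ?_, ?_, ?_⟩
  · rwa [mk_image_eq_of_injOn φ A hφ]
  · rwa [mk_image_eq_of_injOn ψ B hψ]
  · rw [← prodMap_image_prod]
    exact hcomp.image_of_comp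

theorem HasInjRect.exists_injOn_comp [Nonempty α'] [Nonempty β'] {f : α' → β' → γ}
    (h : HasInjRect f μ) (hA : #A ≤ μ) (hB : #B ≤ μ) :
    ∃ (φ : α → α') (ψ : β → β'), InjOn (uncurry fun a b => f (φ a) (ψ b)) (A ×ˢ B) := by
  obtain ⟨C, D, hC, hD, hinj⟩ := h
  obtain ⟨φ, hφ, hφC⟩ := exists_injOn_mapsTo_of_mk_le (hA.trans hC)
  obtain ⟨ψ, hψ, hψD⟩ := exists_injOn_mapsTo_of_mk_le (hB.trans hD)
  exact ⟨φ, ψ, hinj.comp (hφ.prodMap hψ) (hφC.prodMap hψD)⟩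

theorem not_hasInjRect_comp_snd (φ : α → β' → γ) (c : β → β') (hμ : #β' < μ) :
    ¬ HasInjRect (fun a b => φ a (c b)) μ := by
  rintro ⟨A, B, hA, hB, hinj⟩
  obtain ⟨-, D, -, hD, -⟩ :=
    hasInjRect_of_injOn_comp (f := φ) (φ := id) (pos_of_gt hμ).ne' hA hB hinj
  exact hμ.not_ge (hD.trans (mk_set_le D))

theorem hasInjRect_of_injOn_of_indepFst {f : α' → β' → γ} {g : α → β → α'} {h : α → β → β'}
    (hμ : μ ≠ 0) (hA : μ ≤ #A) (hB : μ ≤ #B) (hg : IndepFst (flip g) B A)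
    (hh : IndepFst h A B) (hinj : InjOn (uncurry fun a b => f (g a b) (h a b)) (A ×ˢ B)) :
    HasInjRect f μ := by
  obtain ⟨⟨a₀, ha₀⟩⟩ := mk_ne_zero_iff.1 (hμ.bot_lt.trans_le hA).ne'
  obtain ⟨⟨b₀, hb₀⟩⟩ := mk_ne_zero_iff.1 (hμ.bot_lt.trans_le hB).ne'
  refine hasInjRect_of_injOn_comp (φ := fun a => g a b₀) (ψ := h a₀) hμ hA hB
    (hinj.congr fun ⟨a, b⟩ ⟨ha, hb⟩ => ?_)
  exact congrArg₂ f (hg a ha b hb b₀ hb₀) (hh b hb a ha a₀ ha₀)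

theorem hasInjRect_of_injOn_of_isCanonicalOn {f : α' → β' → γ} {g : α → β → α'} {h : α → β → β'}
    (hμ : 2 ≤ μ) (hA : μ ≤ #A) (hB : μ ≤ #B) (hg : IsCanonicalOn g A B) (hh : IsCanonicalOn h A B)
    (hinj : InjOn (uncurry fun a b => f (g a b) (h a b)) (A ×ˢ B)) :
    HasInjRect f μ ∨ HasInjRect g μ ∨ HasInjRect h μ := by
  have hμ₀ : μ ≠ 0 := (zero_lt_two.trans_le hμ).ne'
  have hone : 1 < μ := Cardinal.one_lt_two.trans_le hμ
  have hAnt : A.Nontrivial := nontrivial_coe_sort.1 (one_lt_iff_nontrivial.1 (hone.trans_le hA))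
  have hBnt : B.Nontrivial := nontrivial_coe_sort.1 (one_lt_iff_nontrivial.1 (hone.trans_le hB))
  rcases hg with hg | hg | hg
  · rcases hh with hh | hh | hh
    · have hindep : IndepFst (fun a b => f (g a b) (h a b)) A B := fun b hb a ha a' ha' =>
        congrArg₂ f (hg b hb a ha a' ha') (hh b hb a ha a' ha')
      exact absurd hinj (hindep.not_injOn_uncurry hAnt hBnt.nonempty)
    · exact .inl (hasInjRect_of_injOn_of_indepFst (g := flip g) (h := flip h) hμ₀ hB hA hg hh
        (injOn_uncurry_flip hinj))
    · exact .inr (.inr ⟨A, B, hA, hB, hh⟩)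
  · rcases hh with hh | hh | hh
    · exact .inl (hasInjRect_of_injOn_of_indepFst hμ₀ hA hB hg hh hinj)
    · have hindep : IndepFst (flip fun a b => f (g a b) (h a b)) B A := fun a ha b hb b' hb' =>
        congrArg₂ f (hg a ha b hb b' hb') (hh a ha b hb b' hb')
      exact absurd (injOn_uncurry_flip hinj) (hindep.not_injOn_uncurry hBnt hAnt.nonempty)
    · exact .inr (.inr ⟨A, B, hA, hB, hh⟩)
  · exact .inr (.inl ⟨A, B, hA, hB, hg⟩)

end InjectiveRectangles

section RarelyInjective

variable {X ι : Type u} {μ : Cardinal.{u}}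

theorem mem_T2rare_iff {f : X → X → X} : f ∈ T2rare X ↔ ∃ μ < #X, ¬ HasInjRect f μ := by
  refine exists_congr fun μ => and_congr_right fun _ =>
    ⟨fun h ⟨A, B, hA, hB, hinj⟩ => ?_, fun h A B hA hB hinj => h ⟨A, B, hA.ge, hB.ge, hinj⟩⟩
  obtain ⟨A', hA', hA'μ⟩ := le_mk_iff_exists_subset.1 hA
  obtain ⟨B', hB', hB'μ⟩ := le_mk_iff_exists_subset.1 hB
  exact h A' B' hA'μ hB'μ (hinj.mono (prod_mono hA' hB'))

theorem hasInjRect_of_notMem_T2rare {F : X → X → X} (hF : F ∉ T2rare X) (hμ : μ < #X) :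
    HasInjRect F μ :=
  not_imp_comm.1 (fun h => mem_T2rare_iff.2 ⟨μ, hμ, h⟩) hF

theorem flip_mem_T2rare {f : X → X → X} (hf : f ∈ T2rare X) : flip f ∈ T2rare X :=
  let ⟨μ, hμ, h⟩ := mem_T2rare_iff.1 hf
  mem_T2rare_iff.2 ⟨μ, hμ, fun hflip => h hflip.flip⟩

theorem comp_mem_T2rare (hX : (#X).IsStrongLimit) {f g h : X → X → X} (hf : f ∈ T2rare X)
    (hg : g ∈ T2rare X) (hh : h ∈ T2rare X) : (fun x y => f (g x y) (h x y)) ∈ T2rare X := by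
  obtain ⟨μf, hμf, hf⟩ := mem_T2rare_iff.1 hf
  obtain ⟨μg, hμg, hg⟩ := mem_T2rare_iff.1 hg
  obtain ⟨μh, hμh, hh⟩ := mem_T2rare_iff.1 hh
  obtain ⟨μ, hμ, hfμ, hgμ, hhμ, h2μ⟩ : ∃ μ < #X, μf ≤ μ ∧ μg ≤ μ ∧ μh ≤ μ ∧ 2 ≤ μ :=
    ⟨max (max μf μg) (max μh 2),
      max_lt (max_lt hμf hμg) (max_lt hμh (ofNat_lt_aleph0.trans_le hX.aleph0_le)),
      by simp, by simp, by simp, by simp⟩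
  have hμ₀ : μ ≠ 0 := (zero_lt_two.trans_le h2μ).ne'
  obtain ⟨l, hl, hcanon⟩ := exists_bound_isCanonicalOn (α := X) (β := X) (γ := X) hX hμ hμ₀
  obtain ⟨l', hl', hcanon'⟩ := exists_bound_isCanonicalOn (α := X) (β := X) (γ := X) hX
    (max_lt hl hμ) (hμ₀.bot_lt.trans_le (le_max_right l μ)).ne'
  refine mem_T2rare_iff.2 ⟨l', hl', fun ⟨A, B, hA, hB, hinj⟩ => ?_⟩
  obtain ⟨A₁, hA₁, B₁, hB₁, hlA₁, hlB₁, hg₁⟩ := hcanon' g A B hA hB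
  obtain ⟨A₂, hA₂, B₂, hB₂, hμA₂, hμB₂, hh₂⟩ := hcanon h A₁ B₁
    ((le_max_left _ _).trans hlA₁) ((le_max_left _ _).trans hlB₁)
  rcases hasInjRect_of_injOn_of_isCanonicalOn h2μ hμA₂ hμB₂ (hg₁.mono hA₂ hB₂) hh₂
    (hinj.mono (prod_mono (hA₂.trans hA₁) (hB₂.trans hB₁))) with hrect | hrect | hrect
  · exact hf (hrect.mono hfμ)
  · exact hg (hrect.mono hgμ)
  · exact hh (hrect.mono hhμ)

theorem comp_snd_mem_T2rare (φ : X → ι → X) (c : X → ι) (hι : #ι < μ) (hμ : μ < #X) :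
    (fun x y => φ x (c y)) ∈ T2rare X :=
  mem_T2rare_iff.2 ⟨μ, hμ, not_hasInjRect_comp_snd φ c hι⟩

theorem unary_fst_mem_T2rare (hX : 2 < #X) (F : X → X) : (fun x _ => F x) ∈ T2rare X :=
  comp_snd_mem_T2rare (fun x _ => F x) (fun _ => PUnit.unit) (by simp) hX

theorem T2rare_ne_univ (hX : ℵ₀ ≤ #X) : T2rare X ≠ Set.univ := by
  obtain ⟨q, hq⟩ := exists_injective2 hX
  intro h
  obtain ⟨μ, hμ, hrect⟩ := mem_T2rare_iff.1 (h ▸ mem_univ q)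
  exact hrect (hasInjRect_of_injective2 hq hμ.le)

theorem exists_injective2_comp_of_notMem_T2rare (hX : (#X).IsStrongLimit)
    (hsing : (#X).IsSingular) {F : X → X → X} (hF : F ∉ T2rare X) :
    ∃ t ∈ T2rare X, ∃ r ∈ T2rare X, ∃ s ∈ T2rare X, ∃ p ∈ T2rare X,
      Injective2 fun x y => t (F (r x y) (s x y)) (p x y) := by
  have : Nonempty X := mk_ne_zero_iff.1 hX.ne_zero
  obtain ⟨ι, c, hι, hfiber⟩ := exists_fibers_lt_of_isSingular hsing
  obtain ⟨q, hq⟩ := exists_injective2 hX.aleph0_le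
  have hrect (i j : ι) : ∃ φ ψ : X → X,
      InjOn (uncurry fun x y => F (φ x) (ψ y)) ((c ⁻¹' {i}) ×ˢ (c ⁻¹' {j})) :=
    (hasInjRect_of_notMem_T2rare hF (max_lt (hfiber i) (hfiber j))).exists_injOn_comp
      (le_max_left _ _) (le_max_right _ _)
  choose φ ψ hφψ using hrect
  have hιι : #(ι × ι) < #X := by
    rw [mk_prod, lift_id]
    exact mul_lt_of_lt hX.aleph0_le hι hι
  obtain ⟨e⟩ : #(ι × ι) ≤ #X := hιι.le
  have : Nonempty (ι × ι) := ⟨c (Classical.arbitrary X), c (Classical.arbitrary X)⟩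
  have hι₂ : 2 ^ #ι < #X := hX.isStrongPrelimit hι
  refine ⟨_, comp_snd_mem_T2rare (fun u k => q u (e k)) (invFun e) (cantor _)
      (hX.isStrongPrelimit hιι),
    _, comp_snd_mem_T2rare (fun x j => φ (c x) j x) c (cantor _) hι₂,
    _, flip_mem_T2rare (comp_snd_mem_T2rare (fun y i => ψ i (c y) y) c (cantor _) hι₂),
    _, comp_snd_mem_T2rare (fun x j => e (c x, j)) c (cantor _) hι₂, fun x x' y y' heq => ?_⟩
  obtain ⟨hval, hcode⟩ := hq heq
  simp only [leftInverse_invFun e.injective _, EmbeddingLike.apply_eq_iff_eq, Prod.mk.injEq]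
    at hcode
  obtain ⟨hx, hy⟩ := hcode
  simp only [flip, hx, hy] at hval
  exact Prod.mk.inj (@hφψ (c x') (c y') (x, y) ⟨hx, hy⟩ (x', y') ⟨rfl, rfl⟩ hval)

end RarelyInjective

section Clones

variable {X : Type u} {C : Set (Ops X)}

/-- A curried binary function, viewed as a binary operation in `Ops X`; the counterpart of
`unaryOp`. -/
def binaryOp (f : X → X → X) : Ops X := ⟨1, fun x => f (x 0) (x 1)⟩

theorem isClone_cloneGen (F : Set (Ops X)) : IsClone (cloneGen F) :=
  ⟨fun n k _ hC => hC.1.1 n k, fun n m f hf g hg C hC =>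
    hC.1.2 n m f (hf C hC) g fun i => hg i C hC⟩

theorem subset_cloneGen (F : Set (Ops X)) : F ⊆ cloneGen F :=
  subset_sInter fun _ hC => hC.2

theorem IsClone.cloneGen_subset (hC : IsClone C) {F : Set (Ops X)} (hF : F ⊆ C) :
    cloneGen F ⊆ C :=
  sInter_subset_of_mem ⟨hC, hF⟩

theorem IsClone.binaryOp_comp_mem (hC : IsClone C) {f g h : X → X → X} (hf : binaryOp f ∈ C)
    (hg : binaryOp g ∈ C) (hh : binaryOp h ∈ C) :
    binaryOp (fun x y => f (g x y) (h x y)) ∈ C :=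
  hC.2 1 1 _ hf ![(binaryOp g).2, (binaryOp h).2] (Fin.forall_fin_two.2 ⟨hg, hh⟩)

theorem IsClone.unaryOp_mem (hC : IsClone C) {F : X → X} (hF : binaryOp (fun x _ => F x) ∈ C) :
    unaryOp F ∈ C :=
  hC.2 1 0 _ hF (fun _ x => x 0) fun _ => hC.1 0 0

theorem IsClone.exists_injective_mem (hC : IsClone C) {q : X → X → X} (hq : binaryOp q ∈ C)
    (hinj : Injective2 q) (n : ℕ) : ∃ Q : (Fin (n + 1) → X) → X, ⟨n, Q⟩ ∈ C ∧ Injective Q := by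
  induction n with
  | zero => exact ⟨fun x => x 0, hC.1 0 0, fun x y h => funext (Fin.forall_fin_one.2 h)⟩
  | succ n ih =>
    obtain ⟨Q, hQ, hQinj⟩ := ih
    refine ⟨fun x => q (Q fun i => x i.castSucc) (x (Fin.last _)), ?_, fun x y h => ?_⟩
    · exact hC.2 1 (n + 1) _ hq ![fun x => Q fun i => x i.castSucc, fun x => x (Fin.last _)]
        (Fin.forall_fin_two.2
          ⟨hC.2 n (n + 1) Q hQ (fun i x => x i.castSucc) fun i => hC.1 _ _, hC.1 _ _⟩)
    · obtain ⟨hinit, hlast⟩ := hinj h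
      exact funext (Fin.lastCases hlast (congrFun (hQinj hinit)))

theorem IsClone.eq_univ [Nonempty X] (hC : IsClone C) (hunary : ∀ F : X → X, unaryOp F ∈ C)
    {q : X → X → X} (hq : binaryOp q ∈ C) (hinj : Injective2 q) : C = Set.univ := by
  refine eq_univ_of_forall fun ⟨n, f⟩ => ?_
  obtain ⟨Q, hQ, hQinj⟩ := hC.exists_injective_mem hq hinj n
  obtain ⟨F, rfl⟩ := hQinj.surjective_comp_right f
  exact hC.2 0 n _ (hunary F) (fun _ => Q) fun _ => hQ

theorem isClone_Pol2 (H : Set (X → X → X)) : IsClone (Pol2 H) :=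
  ⟨fun _ k _ hg => hg k, fun _ _ _ hf g hg k hk => hf (fun i x y => g i fun j => k j x y)
    fun i => hg i k hk⟩

theorem isPrecompleteClone_Pol2 {H : Set (X → X → X)} (hfst : (fun x _ => x) ∈ H)
    (hsnd : (fun _ y => y) ∈ H)
    (hcomp : ∀ f ∈ H, ∀ g ∈ H, ∀ h ∈ H, (fun x y => f (g x y) (h x y)) ∈ H) (hne : H ≠ Set.univ)
    (hmax : ∀ F ∉ H, cloneGen (binaryOp '' insert F H) = Set.univ) :
    IsPrecompleteClone (Pol2 H) := by
  have hHPol : ∀ f ∈ H, binaryOp f ∈ Pol2 H := fun f hf g hg =>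
    hcomp f hf (g 0) (hg 0) (g 1) (hg 1)
  refine ⟨isClone_Pol2 H, fun huniv => ?_, fun f hf => ?_⟩
  · obtain ⟨F, hF⟩ := (ne_univ_iff_exists_notMem H).1 hne
    have hFPol : binaryOp F ∈ Pol2 H := huniv ▸ mem_univ _
    exact hF (hFPol ![fun x _ => x, fun _ y => y] (Fin.forall_fin_two.2 ⟨hfst, hsnd⟩))
  · obtain ⟨g, hg, hfg⟩ : ∃ g : Fin (f.1 + 1) → X → X → X, (∀ i, g i ∈ H) ∧
        (fun x y => f.2 fun i => g i x y) ∉ H := by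
      simpa only [Pol2, mem_ofPred_eq, not_forall, exists_prop] using hf
    have hD := isClone_cloneGen (insert f (Pol2 H))
    have hHD : ∀ F ∈ H, binaryOp F ∈ cloneGen (insert f (Pol2 H)) := fun F hF =>
      subset_cloneGen _ (mem_insert_of_mem f (hHPol F hF))
    have hfgD : binaryOp (fun x y => f.2 fun i => g i x y) ∈ cloneGen (insert f (Pol2 H)) :=
      hD.2 f.1 1 f.2 (subset_cloneGen _ (mem_insert f _)) (fun i => (binaryOp (g i)).2)
        fun i => hHD _ (hg i)
    refine univ_subset_iff.1 ((hmax _ hfg).ge.trans (hD.cloneGen_subset ?_))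
    exact image_subset_iff.2 (insert_subset hfgD hHD)

theorem unaryOp_mem_cloneGen_T2rare (hX : 2 < #X) (F : X → X) :
    unaryOp F ∈ cloneGen (binaryOp '' T2rare X) :=
  (isClone_cloneGen _).unaryOp_mem
    (subset_cloneGen _ (mem_image_of_mem binaryOp (unary_fst_mem_T2rare hX F)))

theorem cloneGen_insert_T2rare (hX : (#X).IsStrongLimit) (hsing : (#X).IsSingular)
    {F : X → X → X} (hF : F ∉ T2rare X) :
    cloneGen (binaryOp '' insert F (T2rare X)) = Set.univ := by
  have : Nonempty X := mk_ne_zero_iff.1 hX.ne_zero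
  have hD := isClone_cloneGen (binaryOp '' insert F (T2rare X))
  have hgen : ∀ f ∈ insert F (T2rare X), binaryOp f ∈ cloneGen (binaryOp '' insert F (T2rare X)) :=
    fun f hf => subset_cloneGen _ (mem_image_of_mem binaryOp hf)
  have hrare : ∀ f ∈ T2rare X, binaryOp f ∈ cloneGen (binaryOp '' insert F (T2rare X)) :=
    fun f hf => hgen f (mem_insert_of_mem F hf)
  obtain ⟨t, ht, r, hr, s, hs, p, hp, hinj⟩ := exists_injective2_comp_of_notMem_T2rare hX hsing hF
  refine hD.eq_univ (fun G => hD.unaryOp_mem (hrare _ (unary_fst_mem_T2rare ?_ G))) ?_ hinj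
  · exact hsing.natCast_lt 2
  · exact hD.binaryOp_comp_mem (hrare t ht)
      (hD.binaryOp_comp_mem (hgen F (mem_insert F _)) (hrare r hr) (hrare s hs)) (hrare p hp)

theorem isPrecompleteClone_Pol2_T2rare (hX : (#X).IsStrongLimit) (hsing : (#X).IsSingular) :
    IsPrecompleteClone (Pol2 (T2rare X)) := by
  have hfst : (fun x _ => x) ∈ T2rare X := unary_fst_mem_T2rare (hsing.natCast_lt 2) id
  exact isPrecompleteClone_Pol2 hfst (flip_mem_T2rare hfst)
    (fun _ hf _ hg _ hh => comp_mem_T2rare hX hf hg hh) (T2rare_ne_univ hX.aleph0_le)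
    fun _ hF => cloneGen_insert_T2rare hX hsing hF

end Clones

/-- **Davies–Rosenberg**: on a set whose cardinality is a strong limit cardinal, the
rarely 1-1 binary operations are closed under composition, their generated clone contains
all unary operations, and if the cardinality is moreover singular then `Pol(T2)` is a
precomplete clone. -/
theorem stmt9 {X : Type u} (hSL : (#X).IsStrongLimit) :
    (∀ f g h : X → X → X, f ∈ T2rare X → g ∈ T2rare X → h ∈ T2rare X →
      (fun x y => f (g x y) (h x y)) ∈ T2rare X) ∧
    (∀ F : X → X, unaryOp F ∈
      cloneGen ((fun f : X → X → X => (⟨1, fun x => f (x 0) (x 1)⟩ : Ops X)) '' T2rare X)) ∧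
    (¬ (#X).IsRegular → IsPrecompleteClone (Pol2 (T2rare X))) := by
  refine ⟨fun f g h => comp_mem_T2rare hSL, fun F => ?_, fun hreg => ?_⟩
  · exact unaryOp_mem_cloneGen_T2rare (ofNat_lt_aleph0.trans_le hSL.aleph0_le) F
  · have hcof : (#X).ord.cof ≠ #X := fun h => hreg ⟨hSL.aleph0_le, h.ge⟩
    exact isPrecompleteClone_Pol2_T2rare hSL ⟨hSL.aleph0_le, hcof⟩
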